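/- Let F be a free group with a fixed free generating set and its Magnus order. If Φ is an automorphism of F inducing the identity on the abelianization F/[F,F], then Φ preserves the Magnus order: a < b implies Φ(a) < Φ(b). -/

import Mathlib

/-! Noncommutative formal power series over `ℤ` in indeterminates indexed by `I`
are modelled as coefficient functions on words (`List I`). -/

/-- Convolution (Cauchy) product of noncommutative power series. -/
def conv {I : Type*} (f g : List I → ℤ) : List I → ℤ :=
  fun w => ∑ k ∈ Finset.range (w.length + 1), f (w.take k) * g (w.drop k)

/-- The power series `1`. -/
def oneSeries {I : Type*} : List I → ℤ := fun w => match w with | [] => 1 | _ => 0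

/-- The power series `1 + X_i`, the Magnus expansion of the generator `x_i`. -/
def genSeries {I : Type*} [DecidableEq I] (i : I) : List I → ℤ :=
  fun w => if w = [] ∨ w = [i] then 1 else 0

/-- The power series `1 - X_i + X_i² - ⋯`, the Magnus expansion of `x_i⁻¹`. -/
def invGenSeries {I : Type*} [DecidableEq I] (i : I) : List I → ℤ :=
  fun w => if w = List.replicate w.length i then (-1) ^ w.length else 0

/-- The expansion of a single letter of a reduced word. -/
def letterSeries {I : Type*} [DecidableEq I] (p : I × Bool) : List I → ℤ :=
  if p.2 then genSeries p.1 else invGenSeries p.1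

/-- The Magnus expansion of an element of the free group on `I`. -/
def magnus {I : Type*} [DecidableEq I] (a : FreeGroup I) : List I → ℤ :=
  ((FreeGroup.toWord a).map letterSeries).foldr conv oneSeries

/-- Order on monomials (words): first by total degree (length), then lexicographically. -/
def monLt {I : Type*} [LinearOrder I] (w v : List I) : Prop :=
  w.length < v.length ∨ (w.length = v.length ∧ List.Lex (· < ·) w v)

/-- `f ≺ g` iff the coefficient of the smallest monomial where `f` and `g` differ
is larger in `g` (i.e. the lowest nonzero coefficient of `g - f` is positive). -/
def seriesLt {I : Type*} [LinearOrder I] (f g : List I → ℤ) : Prop :=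
  ∃ w : List I, f w < g w ∧ ∀ v : List I, monLt v w → f v = g v

/-- The Magnus order on the free group. -/
def magnusLt {I : Type*} [LinearOrder I] [DecidableEq I] (a b : FreeGroup I) : Prop :=
  seriesLt (magnus a) (magnus b)

namespace MagnusAux

section Ops

variable {I : Type*} [DecidableEq I]

/-- Left multiplication by `X_i`. -/
def shift (i : I) : Module.End ℤ (List I → ℤ) where
  toFun g := fun w => match w with
    | [] => 0
    | j :: v => if i = j then g v else 0
  map_add' f g := by
    funext w
    cases w with
    | nil => simp
    | cons j v => by_cases h : i = j <;> simp [h]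
  map_smul' c g := by
    funext w
    cases w with
    | nil => simp
    | cons j v => by_cases h : i = j <;> simp [h]

@[simp] theorem shift_nil (i : I) (g : List I → ℤ) : shift i g [] = 0 := rfl

@[simp] theorem shift_cons (i j : I) (g : List I → ℤ) (v : List I) :
    shift i g (j :: v) = if i = j then g v else 0 := rfl

theorem conv_nil (f g : List I → ℤ) : conv f g [] = f [] * g [] := by simp [conv]

theorem conv_cons (f g : List I → ℤ) (j : I) (v : List I) :
    conv f g (j :: v) = f [] * g (j :: v) + conv (fun u => f (j :: u)) g v := by
  unfold conv
  rw [List.length_cons, Finset.sum_range_succ']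
  simp [add_comm]

theorem conv_zero (g : List I → ℤ) : conv (fun _ => 0) g = fun _ => 0 := by
  funext w; simp [conv]

theorem conv_one (g : List I → ℤ) : conv oneSeries g = g := by
  funext w
  cases w with
  | nil => simp [conv_nil, oneSeries]
  | cons j v =>
    rw [conv_cons]
    have : (fun u : List I => (oneSeries (j :: u) : ℤ)) = fun _ => 0 := by
      funext u; simp [oneSeries]
    rw [this, conv_zero]; simp [oneSeries]

theorem conv_neg (f g : List I → ℤ) : conv (fun u => - f u) g = fun w => - conv f g w := by
  funext w; simp [conv]

theorem conv_gen (i : I) (g : List I → ℤ) : conv (genSeries i) g = g + shift i g := by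
  funext w
  cases w with
  | nil => simp [conv_nil, genSeries]
  | cons j v =>
    rw [conv_cons]
    by_cases h : i = j
    · subst h
      have : (fun u : List I => (genSeries i (i :: u) : ℤ)) = oneSeries := by
        funext u; cases u <;> simp [oneSeries, genSeries]
      rw [this, conv_one]; simp [genSeries]
    · have : (fun u : List I => (genSeries i (j :: u) : ℤ)) = fun _ => 0 := by
        funext u; simp [genSeries, Ne.symm h]
      rw [this, conv_zero]; simp [genSeries, h]

theorem conv_invGen (i : I) (g : List I → ℤ) :
    conv (invGenSeries i) g + shift i (conv (invGenSeries i) g) = g := by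
  funext w
  cases w with
  | nil => simp [conv_nil, invGenSeries]
  | cons j v =>
    rw [Pi.add_apply, conv_cons, shift_cons]
    by_cases h : i = j
    · subst h
      have : (fun u : List I => (invGenSeries i (i :: u) : ℤ)) = fun u => - invGenSeries i u := by
        funext u
        simp only [invGenSeries, List.length_cons, List.replicate_succ, List.cons.injEq, true_and]
        split_ifs <;> simp [pow_succ]
      rw [this, conv_neg]; simp [invGenSeries]
    · have : (fun u : List I => (invGenSeries i (j :: u) : ℤ)) = fun _ => 0 := by
        funext u; simp [invGenSeries, List.replicate_succ, Ne.symm h]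
      rw [this, conv_zero]; simp [invGenSeries, h]

theorem one_add_shift_inj (i : I) (f g : List I → ℤ) (h : f + shift i f = g + shift i g) :
    f = g := by
  funext w
  induction w with
  | nil => simpa using congrFun h []
  | cons j v ih =>
    have := congrFun h (j :: v)
    simp only [Pi.add_apply, shift_cons, ih] at this
    linarith

/-- Left multiplication by the expansion of the inverse of a generator. -/
def invOp (i : I) : Module.End ℤ (List I → ℤ) where
  toFun g := conv (invGenSeries i) g
  map_add' f g := by
    funext w; simp [conv, mul_add, Finset.sum_add_distrib]
  map_smul' c g := by
    funext w
    simp only [conv, Pi.smul_apply, smul_eq_mul, Finset.mul_sum, eq_intCast, Int.cast_id]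
    exact Finset.sum_congr rfl fun k _ => by ring

theorem invOp_apply (i : I) (g : List I → ℤ) : invOp i g = conv (invGenSeries i) g := rfl

/-- The unit `1 + X_i`. -/
def genUnit (i : I) : (Module.End ℤ (List I → ℤ))ˣ where
  val := 1 + shift i
  inv := invOp i
  val_inv := by
    ext1 g
    exact conv_invGen i g
  inv_val := by
    ext1 g
    apply one_add_shift_inj i
    exact conv_invGen i _

/-- The Magnus representation. -/
def rho : FreeGroup I →* Module.End ℤ (List I → ℤ) :=
  (Units.coeHom _).comp (FreeGroup.lift genUnit)

theorem rho_of (i : I) : rho (FreeGroup.of i) = 1 + shift i := by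
  simp [rho, genUnit]

theorem rho_of_inv (i : I) : rho (FreeGroup.of i)⁻¹ = invOp i := by
  simp only [rho, MonoidHom.comp_apply, map_inv, FreeGroup.lift_apply_of]
  rfl

theorem rho_mk (L : List (I × Bool)) :
    rho (FreeGroup.mk L) oneSeries = (L.map letterSeries).foldr conv oneSeries := by
  induction L with
  | nil =>
    change rho (1 : FreeGroup I) oneSeries = _
    simp
  | cons p L ih =>
    have h : FreeGroup.mk (p :: L) = FreeGroup.mk [p] * FreeGroup.mk L := by
      rw [FreeGroup.mul_mk]; rfl
    rw [h, map_mul, Module.End.mul_apply, ih, List.map_cons, List.foldr_cons]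
    obtain ⟨i, b⟩ := p
    cases b with
    | true =>
      change rho (FreeGroup.of i) _ = _
      rw [rho_of]
      simp only [letterSeries, if_true]
      rw [conv_gen]; rfl
    | false =>
      have h2 : FreeGroup.mk [(i, false)] = (FreeGroup.of i)⁻¹ := by
        simp [FreeGroup.of, FreeGroup.inv_mk, FreeGroup.invRev]
      rw [h2, rho_of_inv]
      simp [letterSeries, invOp_apply]

theorem magnus_eq (a : FreeGroup I) : magnus a = rho a oneSeries := by
  rw [magnus, ← rho_mk, FreeGroup.mk_toWord]

/-- Operators raising the order by at least `n`. -/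
def Raises (n : ℕ) : Submodule ℤ (Module.End ℤ (List I → ℤ)) where
  carrier := {T | ∀ k (g : List I → ℤ), (∀ w, w.length < k → g w = 0) →
    ∀ w, w.length < k + n → T g w = 0}
  add_mem' := by
    intro S T hS hT k g hg w hw
    simp [hS k g hg w hw, hT k g hg w hw]
  zero_mem' := by
    intro k g hg w hw
    simp
  smul_mem' := by
    intro c T hT k g hg w hw
    simp [hT k g hg w hw]

theorem Raises.mul {m n : ℕ} {S T : Module.End ℤ (List I → ℤ)} (hS : S ∈ Raises m)
    (hT : T ∈ Raises n) : S * T ∈ Raises (m + n) := by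
  intro k g hg w hw
  exact hS (k + n) (T g) (hT k g hg) w (by omega)

theorem Raises.mono {m n : ℕ} (h : m ≤ n) {S : Module.End ℤ (List I → ℤ)} (hS : S ∈ Raises n) :
    S ∈ Raises m := by
  intro k g hg w hw
  exact hS k g hg w (by omega)

theorem shift_raises (i : I) : shift i ∈ Raises 1 := by
  intro k g hg w hw
  cases w with
  | nil => rfl
  | cons j v =>
    rw [shift_cons, hg v (by simpa using hw)]
    simp

theorem invOp_raises (i : I) : invOp i ∈ Raises 0 := by
  intro k g hg w hw
  rw [invOp_apply, conv]
  refine Finset.sum_eq_zero fun l _ => ?_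
  rw [hg _ (by rw [List.length_drop]; omega), mul_zero]

theorem rho_sub_one (a : FreeGroup I) : rho a - 1 ∈ Raises 1 := by
  induction a using FreeGroup.induction_on with
  | C1 => simp
  | of i =>
    have := shift_raises i
    simpa [rho_of] using this
  | inv_of i _ =>
    have h : rho (FreeGroup.of i)⁻¹ - 1 = - (shift i * invOp i) := by
      rw [rho_of_inv]
      have := (genUnit i).val_inv
      change (1 + shift i) * invOp i = 1 at this
      rw [← this]; noncomm_ring
    rw [h]
    exact neg_mem (Raises.mul (shift_raises i) (invOp_raises i))
  | mul a b ha hb =>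
    have h : rho (a * b) - 1 = (rho a - 1) * (rho b - 1) + (rho a - 1) + (rho b - 1) := by
      rw [map_mul]; noncomm_ring
    rw [h]
    exact add_mem (add_mem (Raises.mono (by omega) (Raises.mul ha hb)) ha) hb

end Ops

variable {I : Type*}

/-- The group ring. -/
abbrev GR (I : Type*) := MonoidAlgebra ℤ (FreeGroup I)

/-- Group elements in the group ring. -/
noncomputable abbrev el (a : FreeGroup I) : GR I := MonoidAlgebra.of ℤ (FreeGroup I) a

/-- The augmentation ideal. -/
noncomputable def Aug (I : Type*) : Submodule ℤ (GR I) :=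
  Submodule.span ℤ (Set.range fun a : FreeGroup I => MonoidAlgebra.of ℤ (FreeGroup I) a - 1)

/-- The span of the `x_i - 1`. -/
noncomputable def Gen (I : Type*) : Submodule ℤ (GR I) :=
  Submodule.span ℤ
    (Set.range fun i : I => MonoidAlgebra.of ℤ (FreeGroup I) (FreeGroup.of i) - 1)

theorem el_one : el (1 : FreeGroup I) = 1 := map_one _

theorem el_sub_mem (a : FreeGroup I) : el a - 1 ∈ Aug I := Submodule.subset_span ⟨a, rfl⟩

theorem gen_le : Gen I ≤ Aug I := by
  rw [Gen, Submodule.span_le]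
  rintro _ ⟨i, rfl⟩
  exact el_sub_mem _

theorem aug_sq_mul {x y : GR I} (hx : x ∈ Aug I) (hy : y ∈ Aug I) : x * y ∈ Aug I ^ 2 := by
  rw [pow_two]; exact Submodule.mul_mem_mul hx hy

theorem aug_le : Aug I ≤ Gen I ⊔ Aug I ^ 2 := by
  rw [Aug, Submodule.span_le]
  rintro _ ⟨a, rfl⟩
  change el a - 1 ∈ Gen I ⊔ Aug I ^ 2
  induction a using FreeGroup.induction_on with
  | C1 => rw [el_one, sub_self]; exact zero_mem _
  | of i => exact Submodule.mem_sup_left (Submodule.subset_span ⟨i, rfl⟩)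
  | inv_of i h =>
    have h2 : el (FreeGroup.of i)⁻¹ - 1 = - (el (FreeGroup.of i) - 1)
        - (el (FreeGroup.of i) - 1) * (el (FreeGroup.of i)⁻¹ - 1) := by
      have : el (FreeGroup.of i) * el (FreeGroup.of i)⁻¹ = 1 := by
        rw [el, el, ← map_mul, mul_inv_cancel]; exact el_one
      rw [sub_mul, mul_sub, this]; noncomm_ring
    rw [h2]
    exact sub_mem (neg_mem h) (Submodule.mem_sup_right (aug_sq_mul (el_sub_mem _) (el_sub_mem _)))
  | mul a b ha hb =>
    have h : el (a * b) - 1 = (el a - 1) * (el b - 1) + (el a - 1) + (el b - 1) := by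
      rw [el, map_mul]; noncomm_ring
    rw [h]
    exact add_mem (add_mem (Submodule.mem_sup_right (aug_sq_mul (el_sub_mem _) (el_sub_mem _))) ha)
      hb

theorem aug_pow_le (n : ℕ) : Aug I ^ n ≤ Gen I ^ n ⊔ Aug I ^ (n + 1) := by
  induction n with
  | zero => simp
  | succ n ih =>
    calc Aug I ^ (n + 1) = Aug I ^ n * Aug I := pow_succ _ _
      _ ≤ (Gen I ^ n ⊔ Aug I ^ (n + 1)) * Aug I := mul_le_mul' ih le_rfl
      _ = Gen I ^ n * Aug I ⊔ Aug I ^ (n + 2) := by rw [Submodule.sup_mul, ← pow_succ]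
      _ ≤ Gen I ^ n * (Gen I ⊔ Aug I ^ 2) ⊔ Aug I ^ (n + 2) :=
        sup_le_sup_right (mul_le_mul' le_rfl aug_le) _
      _ ≤ Gen I ^ (n + 1) ⊔ Aug I ^ (n + 2) := by
        rw [Submodule.mul_sup, ← pow_succ]
        refine sup_le (sup_le le_sup_left ?_) le_sup_right
        refine le_trans ?_ le_sup_right
        rw [pow_add]
        exact mul_le_mul' (pow_le_pow_left' gen_le n) le_rfl

/-- The product of the `x_i - 1` along a word. -/
noncomputable def word (w : List I) : GR I :=
  (w.map fun i => MonoidAlgebra.of ℤ (FreeGroup I) (FreeGroup.of i) - 1).prod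

theorem gen_pow_le (n : ℕ) : Gen I ^ n ≤ Submodule.span ℤ (word '' {w : List I | w.length = n}) := by
  induction n with
  | zero =>
    rw [pow_zero, Submodule.one_eq_span]
    apply Submodule.span_mono
    rintro _ rfl
    exact ⟨[], rfl, rfl⟩
  | succ n ih =>
    rw [pow_succ']
    refine (mul_le_mul' le_rfl ih).trans ?_
    rw [Gen, Submodule.span_mul_span]
    apply Submodule.span_mono
    rintro _ ⟨_, ⟨i, rfl⟩, _, ⟨w, hw, rfl⟩, rfl⟩
    exact ⟨i :: w, by simpa using hw, by simp [word]⟩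

section IA

/-- The extension of an endomorphism to the group ring. -/
noncomputable def ext (Φ : FreeGroup I →* FreeGroup I) : GR I →ₐ[ℤ] GR I :=
  MonoidAlgebra.lift ℤ _ _ ((MonoidAlgebra.of ℤ (FreeGroup I)).comp Φ)

theorem ext_el (Φ : FreeGroup I →* FreeGroup I) (a : FreeGroup I) : ext Φ (el a) = el (Φ a) := by
  rw [ext, el, MonoidAlgebra.lift_of]; rfl

/-- The map `a ↦ a - 1` modulo the square of the augmentation ideal. -/
noncomputable def toQuot : FreeGroup I →* Multiplicative (GR I ⧸ (Aug I ^ 2)) where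
  toFun a := Multiplicative.ofAdd (Submodule.Quotient.mk (el a - 1))
  map_one' := by rw [el_one, sub_self]; rfl
  map_mul' a b := by
    rw [← ofAdd_add, ← Submodule.Quotient.mk_add]
    congr 1
    rw [Submodule.Quotient.eq]
    have h : el (a * b) - 1 - (el a - 1 + (el b - 1)) = (el a - 1) * (el b - 1) := by
      rw [el, map_mul]; noncomm_ring
    rw [h]
    exact aug_sq_mul (el_sub_mem _) (el_sub_mem _)

theorem sub_mem_of_ab {a b : FreeGroup I} (h : Abelianization.of a = Abelianization.of b) :
    el a - el b ∈ Aug I ^ 2 := by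
  have h2 := congrArg (Abelianization.lift (toQuot (I := I))) h
  rw [Abelianization.lift_apply_of, Abelianization.lift_apply_of] at h2
  have h3 : (Submodule.Quotient.mk (el a - 1) : GR I ⧸ (Aug I ^ 2))
    = Submodule.Quotient.mk (el b - 1) := h2
  rw [Submodule.Quotient.eq] at h3
  simpa using h3

theorem ext_mem (Φ : FreeGroup I →* FreeGroup I) {u : GR I} (hu : u ∈ Aug I) :
    ext Φ u ∈ Aug I := by
  rw [Aug] at hu
  induction hu using Submodule.span_induction with
  | mem x hx =>
    obtain ⟨a, rfl⟩ := hx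
    change ext Φ (el a - 1) ∈ _
    rw [map_sub, ext_el, map_one]
    exact el_sub_mem _
  | zero => simp
  | add x y _ _ hx hy => rw [map_add]; exact add_mem hx hy
  | smul c x _ hx => rw [map_smul]; exact Submodule.smul_mem _ _ hx

theorem ext_sub_mem_one (Φ : FreeGroup I →* FreeGroup I)
    (hΦ : ∀ x, Abelianization.of (Φ x) = Abelianization.of x) {u : GR I} (hu : u ∈ Aug I) :
    ext Φ u - u ∈ Aug I ^ 2 := by
  rw [Aug] at hu
  induction hu using Submodule.span_induction with
  | mem x hx =>
    obtain ⟨a, rfl⟩ := hx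
    change ext Φ (el a - 1) - (el a - 1) ∈ _
    rw [map_sub, ext_el, map_one, sub_sub_sub_cancel_right]
    exact sub_mem_of_ab (hΦ a)
  | zero => simp
  | add x y _ _ hx hy => rw [map_add, add_sub_add_comm]; exact add_mem hx hy
  | smul c x _ hx => rw [map_smul, ← smul_sub]; exact Submodule.smul_mem _ _ hx

theorem ext_sub_mem (Φ : FreeGroup I →* FreeGroup I)
    (hΦ : ∀ x, Abelianization.of (Φ x) = Abelianization.of x) (n : ℕ) {u : GR I}
    (hu : u ∈ Aug I ^ n) : ext Φ u - u ∈ Aug I ^ (n + 1) := by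
  induction n generalizing u with
  | zero =>
    rw [pow_zero, Submodule.mem_one] at hu
    obtain ⟨c, rfl⟩ := hu
    rw [AlgHom.commutes, sub_self]
    exact zero_mem _
  | succ n ih =>
    rw [pow_succ] at hu
    induction hu using Submodule.mul_induction_on' with
    | mem_mul_mem x hx y hy =>
      have h : ext Φ (x * y) - x * y = (ext Φ x - x) * ext Φ y + x * (ext Φ y - y) := by
        rw [map_mul]; noncomm_ring
      rw [h]
      refine add_mem ?_ ?_
      · rw [pow_succ]
        exact Submodule.mul_mem_mul (ih hx) (ext_mem Φ hy)
      · rw [add_assoc, pow_add]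
        exact Submodule.mul_mem_mul hx (ext_sub_mem_one Φ hΦ hy)
    | add x _ y _ hx hy => rw [map_add, add_sub_add_comm]; exact add_mem hx hy

end IA

section Rep

variable [DecidableEq I]

/-- The Magnus representation of the group ring. -/
noncomputable def rep : GR I →ₐ[ℤ] Module.End ℤ (List I → ℤ) := MonoidAlgebra.lift ℤ _ _ rho

theorem rep_el (a : FreeGroup I) : rep (el a) = rho a := by
  rw [rep, el, MonoidAlgebra.lift_of]

theorem rep_aug {u : GR I} (hu : u ∈ Aug I) : rep u ∈ Raises 1 := by
  rw [Aug] at hu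
  induction hu using Submodule.span_induction with
  | mem x hx =>
    obtain ⟨a, rfl⟩ := hx
    change rep (el a - 1) ∈ _
    rw [map_sub, rep_el, map_one]
    exact rho_sub_one _
  | zero => simp
  | add x y _ _ hx hy => rw [map_add]; exact add_mem hx hy
  | smul c x _ hx => rw [map_smul]; exact Submodule.smul_mem _ _ hx

theorem rep_aug_pow (n : ℕ) {u : GR I} (hu : u ∈ Aug I ^ n) : rep u ∈ Raises n := by
  induction n generalizing u with
  | zero =>
    rw [pow_zero, Submodule.mem_one] at hu
    obtain ⟨c, rfl⟩ := hu
    rw [AlgHom.commutes]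
    intro k g hg w hw
    simp [hg w hw]
  | succ n ih =>
    rw [pow_succ] at hu
    induction hu using Submodule.mul_induction_on' with
    | mem_mul_mem x hx y hy =>
      rw [map_mul]
      exact Raises.mul (ih hx) (rep_aug hy)
    | add x _ y _ hx hy => rw [map_add]; exact add_mem hx hy

theorem rep_aug_pow_one {n : ℕ} {u : GR I} (hu : u ∈ Aug I ^ n) (w : List I) (hw : w.length < n) :
    rep u oneSeries w = 0 :=
  rep_aug_pow n hu 0 oneSeries (by simp) w (by simpa using hw)

theorem rep_word (w : List I) : rep (word w) oneSeries = Pi.single w 1 := by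
  induction w with
  | nil =>
    funext v
    cases v <;> simp [word, oneSeries]
  | cons i w ih =>
    have h : word (i :: w) = (el (FreeGroup.of i) - 1) * word w := by simp [word]
    rw [h, map_mul, Module.End.mul_apply, ih, map_sub, rep_el, rho_of, map_one, add_sub_cancel_left]
    funext v
    cases v with
    | nil => simp
    | cons j v =>
      rw [shift_cons]
      by_cases hij : i = j
      · subst hij
        simp [Pi.single_apply]
      · simp [Pi.single_apply, hij, Ne.symm hij]

theorem gen_pow_eq_zero {n : ℕ} {s : GR I} (hs : s ∈ Gen I ^ n)
    (h : ∀ w : List I, w.length = n → rep s oneSeries w = 0) : s = 0 := by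
  have h2 := gen_pow_le n hs
  rw [Finsupp.mem_span_image_iff_linearCombination] at h2
  obtain ⟨l, hl, rfl⟩ := h2
  have key : ∀ w, rep (Finsupp.linearCombination ℤ word l) oneSeries w = l w := by
    intro w
    rw [Finsupp.linearCombination_apply, Finsupp.sum, map_sum, LinearMap.sum_apply,
      Finset.sum_apply]
    simp only [map_smul, LinearMap.smul_apply, rep_word, Pi.smul_apply, Pi.single_apply]
    simp
    exact Eq.symm
  have : l = 0 := by
    ext w
    by_cases hw : w.length = n
    · rw [← key, h w hw]; rfl
    · by_contra hne
      exact hw (hl (Finsupp.mem_support_iff.2 hne))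
  rw [this, map_zero]

theorem mem_aug_pow {u : GR I} (hu : u ∈ Aug I) (n : ℕ)
    (h : ∀ w : List I, w.length < n + 1 → rep u oneSeries w = 0) : u ∈ Aug I ^ (n + 1) := by
  induction n with
  | zero => simpa using hu
  | succ n ih =>
    have h1 := aug_pow_le _ (ih fun w hw => h w (by omega))
    obtain ⟨s, hs, r, hr, rfl⟩ := Submodule.mem_sup.1 h1
    have : s = 0 := by
      refine gen_pow_eq_zero hs fun w hw => ?_
      have h3 := h w (by omega)
      rw [map_add, LinearMap.add_apply, Pi.add_apply, rep_aug_pow_one hr w (by omega)] at h3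
      simpa using h3
    rw [this, zero_add]
    exact hr

theorem magnus_sub (a b : FreeGroup I) (w : List I) :
    rep (el b - el a) oneSeries w = magnus b w - magnus a w := by
  rw [map_sub, rep_el, rep_el, magnus_eq, magnus_eq]; rfl

theorem main_aux (Φ : FreeGroup I →* FreeGroup I)
    (hΦ : ∀ x, Abelianization.of (Φ x) = Abelianization.of x) (a b : FreeGroup I) (n : ℕ)
    (h : ∀ w : List I, w.length < n → magnus a w = magnus b w) (w : List I) (hw : w.length ≤ n) :
    magnus (Φ b) w - magnus (Φ a) w = magnus b w - magnus a w := by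
  have hu : el b - el a ∈ Aug I := by
    rw [← sub_sub_sub_cancel_right (el b) (el a) 1]
    exact sub_mem (el_sub_mem b) (el_sub_mem a)
  cases n with
  | zero =>
    have hu' : el (Φ b) - el (Φ a) ∈ Aug I := by
      rw [← ext_el, ← ext_el, ← map_sub]
      exact ext_mem Φ hu
    rw [← magnus_sub, ← magnus_sub, rep_aug_pow_one (n := 1) (by rwa [pow_one]) w (by omega),
      rep_aug_pow_one (n := 1) (by rwa [pow_one]) w (by omega)]
  | succ n =>
    have h1 := mem_aug_pow hu n fun w hw => by rw [magnus_sub, h w hw, sub_self]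
    have h2 := rep_aug_pow_one (ext_sub_mem Φ hΦ _ h1) w (by omega)
    rw [map_sub, LinearMap.sub_apply, Pi.sub_apply, map_sub (ext Φ), ext_el, ext_el, magnus_sub,
      magnus_sub] at h2
    linarith

end Rep

end MagnusAux

theorem magnusOrder_preserved_by_IA_automorphism {I : Type*} [LinearOrder I] [DecidableEq I]
    (Φ : FreeGroup I ≃* FreeGroup I)
    (hΦ : ∀ x : FreeGroup I, Abelianization.of (Φ x) = Abelianization.of x) :
    ∀ a b : FreeGroup I, magnusLt a b → magnusLt (Φ a) (Φ b) := by
  rintro a b ⟨w, hw, hv⟩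
  have hlow : ∀ v : List I, v.length < w.length → magnus a v = magnus b v :=
    fun v h => hv v (Or.inl h)
  have key := MagnusAux.main_aux Φ.toMonoidHom hΦ a b w.length hlow
  refine ⟨w, ?_, fun v h => ?_⟩
  · have := key w le_rfl
    simp only [MulEquiv.toMonoidHom_eq_coe, MonoidHom.coe_coe] at this
    linarith
  · have hl : v.length ≤ w.length := by
      rcases h with h | h
      · exact h.le
      · exact h.1.le
    have := key v hl
    simp only [MulEquiv.toMonoidHom_eq_coe, MonoidHom.coe_coe] at this
    have := hv v h
    linarith
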